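/- For a = 3, the quartic P₃(x) = −4·4⁴x⁴ + 2·2·4⁶x³ − 4²(2·3⁵+5·3⁴+6·3³+6·3²+8·3+1)x² + 3(3·3²+4·3−1)·4³x − (4⁵+3²) has exactly two distinct roots in (0, ∞). -/

import Mathlib

/-!
`P₃` is strictly increasing on `[0, 1]`, positive on `[1, 12]` and strictly decreasing on
`[12, ∞)`, while `P₃(0) < 0` and `P₃(16) < 0`; so each of the two monotone branches contributes
exactly one root. The points `12` and `16` are where the two terms of highest degree cancel, in
the derivative of `P₃` and in `P₃` respectively.
-/

open Set

theorem ncard_setOf_lt_and_eq_eq_two_of_strictMonoOn_of_strictAntiOn {α β : Type*}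
    [ConditionallyCompleteLinearOrder α] [DenselyOrdered α] [TopologicalSpace α] [OrderTopology α]
    [LinearOrder β] [TopologicalSpace β] [OrderClosedTopology β]
    {f : α → β} {a b c d : α} {y : β} (hab : a ≤ b) (hbc : b ≤ c) (hcd : c ≤ d)
    (hcont_left : ContinuousOn f (Icc a b)) (hcont_right : ContinuousOn f (Icc c d))
    (hmono : StrictMonoOn f (Icc a b)) (hmid : ∀ x ∈ Icc b c, y < f x)
    (hanti : StrictAntiOn f (Ici c)) (ha : f a < y) (hd : f d < y) :
    {x | a < x ∧ f x = y}.ncard = 2 := by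
  obtain ⟨r, hr, hfr⟩ := intermediate_value_Ioo hab hcont_left ⟨ha, hmid b (left_mem_Icc.2 hbc)⟩
  obtain ⟨s, hs, hfs⟩ := intermediate_value_Ioo' hcd hcont_right ⟨hd, hmid c (right_mem_Icc.2 hbc)⟩
  have hrs : r < s := hr.2.trans (hbc.trans_lt hs.1)
  suffices h : {x | a < x ∧ f x = y} = {r, s} from h ▸ ncard_pair hrs.ne
  refine Subset.antisymm ?_ (pair_subset ⟨hr.1, hfr⟩ ⟨hr.1.trans hrs, hfs⟩)
  rintro x ⟨hax, hfx⟩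
  rcases le_total x b with hxb | hbx
  · exact .inl (hmono.injOn ⟨hax.le, hxb⟩ (Ioo_subset_Icc_self hr) (hfx.trans hfr.symm))
  rcases le_total x c with hxc | hcx
  · exact absurd hfx (hmid x ⟨hbx, hxc⟩).ne'
  · exact .inr (hanti.injOn hcx hs.1.le (hfx.trans hfs.symm))

/-- The quartic `P_a` from the elimination step for translation-invariant Gibbs measures of the
(2,3)-Ising-Potts model on the binary Cayley tree, as a function of `x`. -/
def isingPottsQuartic (a x : ℝ) : ℝ :=
  -4 * (a + 1) ^ 4 * x ^ 4 + 2 * (a - 1) * (a + 1) ^ 6 * x ^ 3 -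
    (a + 1) ^ 2 * (2 * a ^ 5 + 5 * a ^ 4 + 6 * a ^ 3 + 6 * a ^ 2 + 8 * a + 1) * x ^ 2 +
    a * (3 * a ^ 2 + 4 * a - 1) * (a + 1) ^ 3 * x - ((a + 1) ^ 5 + a ^ 2)

theorem continuous_isingPottsQuartic (a : ℝ) : Continuous (isingPottsQuartic a) := by
  unfold isingPottsQuartic
  fun_prop

theorem isingPottsQuartic_zero_neg {a : ℝ} (ha : -1 < a) : isingPottsQuartic a 0 < 0 := by
  have h_pow : 0 < (a + 1) ^ 5 := pow_pos (by linarith) 5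
  have h_sq : 0 ≤ a ^ 2 := sq_nonneg a
  unfold isingPottsQuartic
  linarith

theorem isingPottsQuartic_three (x : ℝ) :
    isingPottsQuartic 3 x = -1024 * x ^ 4 + 16384 * x ^ 3 - 18112 * x ^ 2 + 7296 * x - 1033 := by
  unfold isingPottsQuartic
  ring

theorem deriv_isingPottsQuartic_three (x : ℝ) :
    deriv (isingPottsQuartic 3) x = -4096 * x ^ 3 + 49152 * x ^ 2 - 36224 * x + 7296 := by
  rw [funext isingPottsQuartic_three]
  have h := (((((hasDerivAt_pow 4 x).const_mul (-1024)).add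
    ((hasDerivAt_pow 3 x).const_mul 16384)).sub ((hasDerivAt_pow 2 x).const_mul 18112)).add
    ((hasDerivAt_id' x).const_mul 7296)).sub_const 1033
  exact h.deriv.trans (by push_cast; ring)

theorem strictMonoOn_isingPottsQuartic_three : StrictMonoOn (isingPottsQuartic 3) (Icc 0 1) := by
  refine strictMonoOn_of_deriv_pos (convex_Icc 0 1)
    (continuous_isingPottsQuartic 3).continuousOn fun x hx ↦ ?_
  rw [interior_Icc] at hx
  have h_cubic : 0 ≤ x ^ 2 * (1 - x) := mul_nonneg (sq_nonneg x) (sub_nonneg.2 hx.2.le)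
  have h_quadratic : 0 < 45056 * x ^ 2 - 36224 * x + 7296 := by
    nlinarith [sq_nonneg (x - 283 / 704)]
  calc 0 < 4096 * (x ^ 2 * (1 - x)) + (45056 * x ^ 2 - 36224 * x + 7296) := by positivity
    _ = deriv (isingPottsQuartic 3) x := by rw [deriv_isingPottsQuartic_three]; ring

theorem strictAntiOn_isingPottsQuartic_three : StrictAntiOn (isingPottsQuartic 3) (Ici 12) := by
  refine strictAntiOn_of_deriv_neg (convex_Ici 12)
    (continuous_isingPottsQuartic 3).continuousOn fun x hx ↦ ?_
  rw [interior_Ici, mem_Ioi] at hx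
  have h_cubic : 0 ≤ x ^ 2 * (x - 12) := mul_nonneg (sq_nonneg x) (sub_nonneg.2 hx.le)
  calc deriv (isingPottsQuartic 3) x = -4096 * (x ^ 2 * (x - 12)) - (36224 * x - 7296) := by
        rw [deriv_isingPottsQuartic_three]; ring
    _ < 0 := by linarith

theorem isingPottsQuartic_three_pos {x : ℝ} (hx : x ∈ Icc 1 12) : 0 < isingPottsQuartic 3 x := by
  obtain ⟨h_one, h_twelve⟩ := hx
  have h_quartic : 0 ≤ x ^ 2 * ((x - 1) * (12 - x)) :=
    mul_nonneg (sq_nonneg x) (mul_nonneg (sub_nonneg.2 h_one) (sub_nonneg.2 h_twelve))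
  have h_quadratic : 1033 < 3072 * x ^ 2 - 5824 * x + 7296 := by nlinarith [sq_nonneg (x - 1)]
  have h_cubic : 1033 < x * (3072 * x ^ 2 - 5824 * x + 7296) :=
    h_quadratic.trans_le (le_mul_of_one_le_left (by linarith) h_one)
  calc 0 < 1024 * (x ^ 2 * ((x - 1) * (12 - x))) +
        (x * (3072 * x ^ 2 - 5824 * x + 7296) - 1033) := by linarith
    _ = isingPottsQuartic 3 x := by rw [isingPottsQuartic_three]; ring

theorem isingPottsQuartic_three_sixteen_neg : isingPottsQuartic 3 16 < 0 := by
  norm_num [isingPottsQuartic_three]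

theorem ncard_pos_roots_isingPottsQuartic_three :
    {x : ℝ | 0 < x ∧ isingPottsQuartic 3 x = 0}.ncard = 2 :=
  ncard_setOf_lt_and_eq_eq_two_of_strictMonoOn_of_strictAntiOn
    zero_le_one (by norm_num) (by norm_num)
    (continuous_isingPottsQuartic 3).continuousOn (continuous_isingPottsQuartic 3).continuousOn
    strictMonoOn_isingPottsQuartic_three (fun _ ↦ isingPottsQuartic_three_pos)
    strictAntiOn_isingPottsQuartic_three (isingPottsQuartic_zero_neg (by norm_num))
    isingPottsQuartic_three_sixteen_neg

/-- for `a = 3`, the quartic `P₃` of the (2,3)-Ising-Potts model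
has exactly two distinct roots in `(0, ∞)`. -/
theorem stmt17 :
    {x : ℝ | 0 < x ∧
      -4 * (4 : ℝ) ^ 4 * x ^ 4 + 2 * 2 * (4 : ℝ) ^ 6 * x ^ 3 -
        (4 : ℝ) ^ 2 * (2 * 3 ^ 5 + 5 * 3 ^ 4 + 6 * 3 ^ 3 + 6 * 3 ^ 2 + 8 * 3 + 1) * x ^ 2 +
        3 * (3 * 3 ^ 2 + 4 * 3 - 1) * (4 : ℝ) ^ 3 * x - ((4 : ℝ) ^ 5 + 3 ^ 2) = 0}.ncard
      = 2 := by
  convert ncard_pos_roots_isingPottsQuartic_three using 5 with x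
  unfold isingPottsQuartic
  norm_num
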